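/- With the test graph T = (V,E) and the vertices v_0 = v_n, v_1, …, v_n as in the construction below, there is no partition π of V such that simultaneously (i) for every i ∈ {1,…,n} the vertices v_i and v_{i−1} lie in different blocks of π, and (ii) the graph of colored components GCC(T^π) is a tree. Equivalently, for every partition π of V such that GCC(T^π) is a tree, there exists i ∈ {1,…,n} with v_i and v_{i−1} in the same block of π. -/

import Mathlib

open MeasureTheory ProbabilityTheory Filter Matrix Asymptotics
open scoped BigOperators ENNReal
open scoped Classical

noncomputable section

/-- The diagonal projection `Δ` on `N × N` complex matrices. -/
def dproj {N : ℕ} (A : Matrix (Fin N) (Fin N) ℂ) : Matrix (Fin N) (Fin N) ℂ :=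
  Matrix.of fun i j => if i = j then A i j else 0

/-- The operator norm of a matrix acting on `ℓ²({1,…,N})`. -/
def matOpNorm {N : ℕ} (A : Matrix (Fin N) (Fin N) ℂ) : ℝ :=
  ‖Matrix.toEuclideanCLM (𝕜 := ℂ) A‖

/-! ### Multigraph combinatorics -/

section Graph

variable {V E : Type} (src tgt : E → V)

/-- Adjacency through an edge avoiding a forbidden set `F` of edges
(direction is ignored). -/
def adjOn (F : Set E) (a b : V) : Prop :=
  ∃ e, e ∉ F ∧ ((src e = a ∧ tgt e = b) ∨ (src e = b ∧ tgt e = a))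

/-- Reachability in the graph, using only edges outside `F`. -/
def reachOn (F : Set E) : V → V → Prop :=
  Relation.ReflTransGen (adjOn src tgt F)

lemma adjOn_symm (F : Set E) : Symmetric (adjOn src tgt F) := by
  rintro a b ⟨e, he, h⟩
  exact ⟨e, he, h.symm⟩

/-- The setoid of connectivity using edges outside `F`. -/
def connSetoid (F : Set E) : Setoid V :=
  ⟨reachOn src tgt F,
    ⟨fun _ => Relation.ReflTransGen.refl,
     fun h =>
       haveI : Std.Symm (adjOn src tgt F) := ⟨fun _ _ h' => adjOn_symm src tgt F h'⟩
       (Relation.ReflTransGen.stdSymm (r := adjOn src tgt F)).symm _ _ h,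
     fun h h' => Relation.ReflTransGen.trans h h'⟩⟩

/-- Number of connected components of the graph with the edges in `F` deleted. -/
def ncompAvoiding (F : Set E) : ℕ :=
  Nat.card (Quotient (connSetoid src tgt F))

/-- Number of connected components. -/
def ncomp : ℕ := ncompAvoiding src tgt ∅

/-- The graph is connected. -/
def IsConnectedGraph : Prop := ∀ a b : V, reachOn src tgt ∅ a b

/-- A cut edge (bridge): deleting it disconnects its endpoints. -/
def IsCutEdge (e : E) : Prop := ¬ reachOn src tgt {e} (src e) (tgt e)

/-- The set of cut edges. -/
def cutEdges : Set E := {e | IsCutEdge src tgt e}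

/-- The setoid whose classes are the two-edge connected components
(connected components after deleting all cut edges). -/
def teccSetoid : Setoid V := connSetoid src tgt (cutEdges src tgt)

/-- Degree, in the forest of two-edge connected components, of a
two-edge connected component: the number of cut edges incident to it. -/
def teccDeg (c : Quotient (teccSetoid src tgt)) : ℕ :=
  Nat.card {e : E // IsCutEdge src tgt e ∧
    (Quotient.mk (teccSetoid src tgt) (src e) = c ∨
      Quotient.mk (teccSetoid src tgt) (tgt e) = c)}

/-- `𝔣(G)`: the number of leaves of the forest of two-edge connected components,
single-vertex trees of the forest counting twice. -/
def frak : ℕ :=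
  Nat.card {c : Quotient (teccSetoid src tgt) // teccDeg src tgt c = 1} +
    2 * Nat.card {c : Quotient (teccSetoid src tgt) // teccDeg src tgt c = 0}

end Graph

/-! ### Graph monomials -/

/-- A graph monomial: a finite directed multigraph with two roots and edges
labelled by a family index in `Fin L` and an index in `K`.  (Connectedness is
required separately via `IsConnectedGraph`.) -/
structure GraphMonomial (L : ℕ) (K : Type) where
  V : Type
  E : Type
  fintV : Fintype V
  fintE : Fintype E
  src : E → V
  tgt : E → V
  vin : V
  vout : V
  labL : E → Fin L
  labK : E → K

attribute [instance] GraphMonomial.fintV GraphMonomial.fintE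

namespace GraphMonomial

variable {L : ℕ} {K : Type} (g : GraphMonomial L K)

/-- Evaluation of a graph monomial in a collection of matrices. -/
def eval {N : ℕ} (A : Fin L → K → Matrix (Fin N) (Fin N) ℂ) :
    Matrix (Fin N) (Fin N) ℂ :=
  Matrix.of fun i j => ∑ φ : g.V → Fin N,
    if φ g.vin = j ∧ φ g.vout = i then
      ∏ e : g.E, A (g.labL e) (g.labK e) (φ (g.tgt e)) (φ (g.src e))
    else 0

/-- The starting vertex of a step `(e, b)`: `e` traversed forward if `b = true`,
backward otherwise. -/
def stepSrc (s : g.E × Bool) : g.V := if s.2 then g.src s.1 else g.tgt s.1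

/-- The ending vertex of a step. -/
def stepTgt (s : g.E × Bool) : g.V := if s.2 then g.tgt s.1 else g.src s.1

/-- A simple cycle of the underlying undirected multigraph: a nonempty cyclic
sequence of steps with pairwise distinct edges and pairwise distinct vertices. -/
def IsSimpleCycle (c : List (g.E × Bool)) : Prop :=
  ∃ h : c ≠ [],
    (∀ i : Fin c.length,
      g.stepTgt (c.get i) =
        g.stepSrc (c.get ⟨((i : ℕ) + 1) % c.length,
          Nat.mod_lt _ (List.length_pos_iff.mpr h)⟩)) ∧
    (c.map Prod.fst).Nodup ∧ (c.map g.stepSrc).Nodup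

/-- A cycle is directed when it traverses all its edges consistently with
their orientations (one way or the other). -/
def IsDirectedCycleList (c : List (g.E × Bool)) : Prop :=
  (∀ s ∈ c, s.2 = true) ∨ (∀ s ∈ c, s.2 = false)

/-- `S` is the edge set of some simple cycle. -/
def IsCycleEdgeSet (S : Finset g.E) : Prop :=
  ∃ c, g.IsSimpleCycle c ∧ (c.map Prod.fst).toFinset = S

/-- The underlying graph is an oriented cactus: it is connected, every simple
cycle is directed, and every edge belongs to exactly one simple cycle. -/
def IsOrientedCactus : Prop :=
  IsConnectedGraph g.src g.tgt ∧
  (∀ c, g.IsSimpleCycle c → g.IsDirectedCycleList c) ∧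
  (∀ e : g.E, ∃! S : Finset g.E, g.IsCycleEdgeSet S ∧ e ∈ S)

/-- A cactus-type monomial: an oriented cactus whose input and output coincide. -/
def IsCactusType : Prop := g.vin = g.vout ∧ g.IsOrientedCactus

/-- A member of `ℱ`: a directed simple path (oriented from the input, at the far
right, to the output, at the far left) with oriented cacti attached to the
vertices of the path (the root of each cactus being a path vertex). -/
def IsPathCactusType : Prop :=
  IsConnectedGraph g.src g.tgt ∧
  ∃ (d : ℕ) (v : Fin (d + 1) → g.V) (f : Fin d → g.E),
    Function.Injective v ∧ Function.Injective f ∧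
    (∀ j : Fin d, g.src (f j) = v j.succ ∧ g.tgt (f j) = v j.castSucc) ∧
    g.vin = v (Fin.last d) ∧ g.vout = v 0 ∧
    (∀ c, g.IsSimpleCycle c → g.IsDirectedCycleList c ∧ ∀ s ∈ c, s.1 ∉ Set.range f) ∧
    (∀ e : g.E, e ∉ Set.range f →
      ∃! S : Finset g.E, g.IsCycleEdgeSet S ∧ e ∈ S) ∧
    (∀ w : g.V, ∃! j : Fin (d + 1), reachOn g.src g.tgt (Set.range f) w (v j))

end GraphMonomial
/-! ### Random matrices, expectations, test graphs -/

/-- The entries of the random matrix `X` are measurable. -/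
def EntriesMeasurable {N : ℕ} {Ω : Type} [MeasurableSpace Ω]
    (X : Ω → Matrix (Fin N) (Fin N) ℂ) : Prop :=
  ∀ i j, Measurable fun ω => X ω i j

/-- The entries of the random matrix `X` are essentially bounded. -/
def EntriesBounded {N : ℕ} {Ω : Type} [MeasurableSpace Ω] (μ : Measure Ω)
    (X : Ω → Matrix (Fin N) (Fin N) ℂ) : Prop :=
  ∃ C : ℝ, ∀ᵐ ω ∂μ, ∀ i j, ‖X ω i j‖ ≤ C

/-- The σ-algebra generated by the entries of the matrices of a family. -/
def famSigma {N : ℕ} {Ω K : Type} [MeasurableSpace Ω]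
    (A : K → Ω → Matrix (Fin N) (Fin N) ℂ) : MeasurableSpace Ω :=
  ⨆ k : K, ⨆ i : Fin N, ⨆ j : Fin N,
    MeasurableSpace.comap (fun ω => A k ω i j) inferInstance

/-- Permutation invariance of a family of `N × N` random matrices. -/
def PermInvariant {N : ℕ} {Ω K : Type} [MeasurableSpace Ω] (μ : Measure Ω)
    (A : K → Ω → Matrix (Fin N) (Fin N) ℂ) : Prop :=
  ∀ σ : Equiv.Perm (Fin N),
    Measure.map (fun ω => fun (k : K) (i j : Fin N) => A k ω (σ i) (σ j)) μ =
      Measure.map (fun ω => fun (k : K) (i j : Fin N) => A k ω i j) μ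

/-- A test graph with matrix-valued edge labels. -/
structure TestGraph (N : ℕ) (Ω : Type) where
  V : Type
  E : Type
  fintV : Fintype V
  fintE : Fintype E
  src : E → V
  tgt : E → V
  lab : E → Ω → Matrix (Fin N) (Fin N) ℂ

attribute [instance] TestGraph.fintV TestGraph.fintE

namespace TestGraph

variable {N : ℕ} {Ω : Type} [MeasurableSpace Ω]

/-- Number of connected components `c(T)` of a test graph. -/
def ncc (T : TestGraph N Ω) : ℕ := ncomp T.src T.tgt

/-- The (unnormalized) trace observable of a test graph. -/
def tauInner (T : TestGraph N Ω) (ω : Ω) : ℂ :=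
  ∑ φ : T.V → Fin N, ∏ e : T.E, T.lab e ω (φ (T.tgt e)) (φ (T.src e))

/-- The (unnormalized) injective trace observable of a test graph. -/
def tau0Inner (T : TestGraph N Ω) (ω : Ω) : ℂ :=
  ∑ φ : T.V → Fin N,
    if Function.Injective φ then ∏ e : T.E, T.lab e ω (φ (T.tgt e)) (φ (T.src e)) else 0

/-- `τ_N[T]`. -/
def tau (T : TestGraph N Ω) (μ : Measure Ω) : ℂ :=
  ((N : ℂ) ^ T.ncc)⁻¹ * ∫ ω, T.tauInner ω ∂μ

/-- `τ⁰_N[T]`. -/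
def tau0 (T : TestGraph N Ω) (μ : Measure Ω) : ℂ :=
  ((N : ℂ) ^ T.ncc)⁻¹ * ∫ ω, T.tau0Inner ω ∂μ

/-- The quotient test graph `T^π` associated with a partition `π` of the
vertices of `T`. -/
def quot (T : TestGraph N Ω) (π : Setoid T.V) : TestGraph N Ω where
  V := Quotient π
  E := T.E
  fintV := @Quotient.fintype _ T.fintV π fun _ _ => Classical.propDecidable _
  fintE := T.fintE
  src := fun e => Quotient.mk π (T.src e)
  tgt := fun e => Quotient.mk π (T.tgt e)
  lab := T.lab

end TestGraph

/-- Monomial `D₀ X_{k(1)} D₁ ⋯ X_{k(d)} D_d` evaluated in a family of matrices: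
the coefficients are given as an arbitrary function `D : ℕ → Matrix`. -/
def monomialEval {K : Type} {N : ℕ} (A : K → Matrix (Fin N) (Fin N) ℂ)
    (dd : ℕ) (kk : ℕ → K) (D : ℕ → Matrix (Fin N) (Fin N) ℂ) :
    Matrix (Fin N) (Fin N) ℂ :=
  D 0 * (List.ofFn fun j : Fin dd => A (kk ((j : ℕ) + 1)) * D ((j : ℕ) + 1)).prod

/-- The centered product `(M₁ - ΔM₁)(M₂ - ΔM₂)⋯(Mₙ - ΔMₙ)`. -/
def centeredProd {N n : ℕ} (M : Fin n → Matrix (Fin N) (Fin N) ℂ) :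
    Matrix (Fin N) (Fin N) ℂ :=
  (List.ofFn fun i : Fin n => M i - dproj (M i)).prod

/-- Mutual independence of the families `A 1, …, A L` of random matrices. -/
def IndepFamilies {Ω K : Type} {L : ℕ} [MeasurableSpace Ω] (μ : Measure Ω)
    (A : (N : ℕ) → Fin L → K → Ω → Matrix (Fin N) (Fin N) ℂ) : Prop :=
  ∀ N : ℕ, ProbabilityTheory.iIndep (fun ℓ : Fin L => famSigma (A N ℓ)) μ

/-- Uniform boundedness, in operator norm, of families of random matrices. -/
def UnifOpNormBound {Ω K : Type} {L : ℕ} [MeasurableSpace Ω] (μ : Measure Ω)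
    (A : (N : ℕ) → Fin L → K → Ω → Matrix (Fin N) (Fin N) ℂ) : Prop :=
  ∃ C : ℝ, ∀ (N : ℕ) (ℓ : Fin L) (k : K), ∀ᵐ ω ∂μ, matOpNorm (A N ℓ k ω) ≤ C

/-- The growth bound (MS) for the family `A · ℓ`:
for all graph monomials `g₁, …, gₘ` labelled in the single family `ℓ` and having
equal input and output, `E[∏ᵢ Tr gᵢ(A_N)] = O(N^{Σᵢ 𝔣(gᵢ)/2})` as `N → ∞`. -/
def MSBound {Ω K : Type} {L : ℕ} [MeasurableSpace Ω] (μ : Measure Ω)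
    (A : (N : ℕ) → Fin L → K → Ω → Matrix (Fin N) (Fin N) ℂ) (ℓ : Fin L) : Prop :=
  ∀ (m : ℕ), 1 ≤ m → ∀ gs : Fin m → GraphMonomial L K,
    (∀ i : Fin m, IsConnectedGraph (gs i).src (gs i).tgt ∧
      (∀ e, (gs i).labL e = ℓ) ∧ (gs i).vin = (gs i).vout) →
    (fun N : ℕ => ∫ ω, ∏ i : Fin m,
        Matrix.trace ((gs i).eval fun ℓ' k => A N ℓ' k ω) ∂μ)
      =O[atTop] fun N : ℕ => (N : ℝ) ^ ((∑ i : Fin m, (frak (gs i).src (gs i).tgt : ℝ)) / 2)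
/-- The monomial `g₀(A) X_{k(1)} g₁(A) ⋯ X_{k(d)} g_d(A)` with graph-monomial
coefficients, evaluated at the family `A ℓi`. -/
def cactusMonomialEval {L : ℕ} {K : Type} {N : ℕ}
    (A : Fin L → K → Matrix (Fin N) (Fin N) ℂ) (ℓi : Fin L) (dd : ℕ)
    (kk : ℕ → K) (gg : ℕ → GraphMonomial L K) : Matrix (Fin N) (Fin N) ℂ :=
  (gg 0).eval A *
    (List.ofFn fun j : Fin dd =>
      A ℓi (kk ((j : ℕ) + 1)) * (gg ((j : ℕ) + 1)).eval A).prod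
/-! ### The test graph `T` built from the monomials `t_1, …, t_n` -/

section Construction

variable {L : ℕ} {K : Type}

/-- Cyclic successor in `Fin n`. -/
def nxt {n : ℕ} (i : Fin n) : Fin n := ⟨((i : ℕ) + 1) % n, Nat.mod_lt _ i.pos⟩

/-- Vertices of the disjoint union of the graph monomials `t_1, …, t_n`:
for each `i`, the path vertices of `t_i` are the roots of the attached cacti
`g_{0,i}, …, g_{d_i,i}`. -/
def BigV (n : ℕ) (d : Fin n → ℕ) (g : Fin n → ℕ → GraphMonomial L K) : Type :=
  Σ i : Fin n, Σ j : Fin (d i + 1), (g i (j : ℕ)).V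

instance (n : ℕ) (d : Fin n → ℕ) (g : Fin n → ℕ → GraphMonomial L K) :
    Fintype (BigV n d g) := by
  unfold BigV; infer_instance

/-- Edges: the edges of the cacti, plus the path edges (the edge `(i, j)` goes
from the path vertex `u_{i,j+1}` to `u_{i,j}` and carries the label
`(ℓ_i, k_i(j+1))`). -/
def BigE (n : ℕ) (d : Fin n → ℕ) (g : Fin n → ℕ → GraphMonomial L K) : Type :=
  (Σ i : Fin n, Σ j : Fin (d i + 1), (g i (j : ℕ)).E) ⊕ (Σ i : Fin n, Fin (d i))

instance (n : ℕ) (d : Fin n → ℕ) (g : Fin n → ℕ → GraphMonomial L K) :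
    Fintype (BigE n d g) := by
  unfold BigE; infer_instance

/-- The path vertex `u_{i,j}`, i.e. the root of the cactus `g_{j,i}`. -/
def pathVtx (n : ℕ) (d : Fin n → ℕ) (g : Fin n → ℕ → GraphMonomial L K)
    (i : Fin n) (j : Fin (d i + 1)) : BigV n d g :=
  ⟨i, j, (g i (j : ℕ)).vin⟩

/-- The input vertex of `t_i`. -/
def inVtx (n : ℕ) (d : Fin n → ℕ) (g : Fin n → ℕ → GraphMonomial L K)
    (i : Fin n) : BigV n d g :=
  pathVtx n d g i (Fin.last (d i))

/-- The output vertex of `t_i`. -/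
def outVtx (n : ℕ) (d : Fin n → ℕ) (g : Fin n → ℕ → GraphMonomial L K)
    (i : Fin n) : BigV n d g :=
  pathVtx n d g i 0

/-- The setoid identifying, for each `i` (cyclically), the input of `t_i` with
the output of `t_{i+1}`. -/
def glueSetoid (n : ℕ) (d : Fin n → ℕ) (g : Fin n → ℕ → GraphMonomial L K) :
    Setoid (BigV n d g) :=
  ⟨Relation.EqvGen fun x y =>
      ∃ i : Fin n, x = inVtx n d g i ∧ y = outVtx n d g (nxt i),
   Relation.EqvGen.is_equivalence _⟩

/-- Source map of the glued test graph `T`. -/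
def bigSrc (n : ℕ) (d : Fin n → ℕ) (g : Fin n → ℕ → GraphMonomial L K) :
    BigE n d g → Quotient (glueSetoid n d g) := fun e =>
  match e with
  | Sum.inl ⟨i, j, e'⟩ =>
      Quotient.mk (glueSetoid n d g) ⟨i, j, (g i (j : ℕ)).src e'⟩
  | Sum.inr ⟨i, j⟩ =>
      Quotient.mk (glueSetoid n d g) (pathVtx n d g i j.succ)

/-- Target map of the glued test graph `T`. -/
def bigTgt (n : ℕ) (d : Fin n → ℕ) (g : Fin n → ℕ → GraphMonomial L K) :
    BigE n d g → Quotient (glueSetoid n d g) := fun e =>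
  match e with
  | Sum.inl ⟨i, j, e'⟩ =>
      Quotient.mk (glueSetoid n d g) ⟨i, j, (g i (j : ℕ)).tgt e'⟩
  | Sum.inr ⟨i, j⟩ =>
      Quotient.mk (glueSetoid n d g) (pathVtx n d g i j.castSucc)

/-- The family index (color) carried by each edge of `T`. -/
def bigCol (n : ℕ) (ℓv : Fin n → Fin L) (d : Fin n → ℕ)
    (g : Fin n → ℕ → GraphMonomial L K) : BigE n d g → Fin L := fun e =>
  match e with
  | Sum.inl ⟨i, j, e'⟩ => (g i (j : ℕ)).labL e'
  | Sum.inr ⟨i, _⟩ => ℓv i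

/-- The vertex `v_i` of `T` (the class of the input of `t_i`). -/
def vCls (n : ℕ) (d : Fin n → ℕ) (g : Fin n → ℕ → GraphMonomial L K)
    (i : Fin n) : Quotient (glueSetoid n d g) :=
  Quotient.mk (glueSetoid n d g) (inVtx n d g i)

/-- The test graph `T`, with the matrix `A_{N,ℓ}^{(k)}` assigned to each edge
labelled `(ℓ, k)`. -/
def bigTG (n : ℕ) (ℓv : Fin n → Fin L) (d : Fin n → ℕ) (kv : Fin n → ℕ → K)
    (g : Fin n → ℕ → GraphMonomial L K) {Ω : Type} (N : ℕ)
    (A : Fin L → K → Ω → Matrix (Fin N) (Fin N) ℂ) : TestGraph N Ω where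
  V := Quotient (glueSetoid n d g)
  E := BigE n d g
  fintV := @Quotient.fintype _ inferInstance (glueSetoid n d g)
    fun _ _ => Classical.propDecidable _
  fintE := inferInstance
  src := bigSrc n d g
  tgt := bigTgt n d g
  lab := fun e =>
    match e with
    | Sum.inl ⟨i, j, e'⟩ => fun ω => A ((g i (j : ℕ)).labL e') ((g i (j : ℕ)).labK e') ω
    | Sum.inr ⟨i, j⟩ => fun ω => A (ℓv i) (kv i ((j : ℕ) + 1)) ω

end Construction
/-! ### The graph of colored components -/

section GCC

variable {V E : Type} (src tgt : E → V) {L : ℕ} (col : E → Fin L)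

/-- Connectivity using only edges of color `ℓ`. -/
def colorSetoid (ℓ : Fin L) : Setoid V :=
  connSetoid src tgt {e | col e ≠ ℓ}

/-- The colored components: maximal connected subgraphs all of whose edges
have one single color.  Such a component is encoded by its color together
with the corresponding class of vertices (which is required to contain at
least one edge of that color). -/
def ColoredComp : Type :=
  {p : Σ ℓ : Fin L, Quotient (colorSetoid src tgt col ℓ) //
    ∃ e, col e = p.1 ∧ Quotient.mk (colorSetoid src tgt col p.1) (src e) = p.2}

/-- Membership of a vertex in a colored component. -/
def memCC (v : V) (S : ColoredComp src tgt col) : Prop :=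
  Quotient.mk (colorSetoid src tgt col S.1.1) v = S.1.2

/-- The graph of colored components `GCC`: the undirected bipartite graph on
the colored components and the vertices, a vertex being joined to each colored
component it belongs to. -/
def gccGraph : SimpleGraph (ColoredComp src tgt col ⊕ V) where
  Adj x y :=
    (∃ S v, x = Sum.inl S ∧ y = Sum.inr v ∧ memCC src tgt col v S) ∨
    (∃ S v, x = Sum.inr v ∧ y = Sum.inl S ∧ memCC src tgt col v S)
  symm := by
    constructor
    rintro x y (⟨S, v, hx, hy, hm⟩ | ⟨S, v, hx, hy, hm⟩)
    · exact Or.inr ⟨S, v, hy, hx, hm⟩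
    · exact Or.inl ⟨S, v, hy, hx, hm⟩
  loopless := by
    constructor
    rintro x (⟨S, v, rfl, hy, hm⟩ | ⟨S, v, rfl, hy, hm⟩) <;> simp at hy

end GCC

/-- An acyclic graph has no closed walk `x 0, S 0, x 1, S 1, …, S (m - 1), x m = x 0` without
backtracking (except possibly at the base point `x 0`). -/
lemma SimpleGraph.IsAcyclic.ne_of_alternating {X : Type*} {G : SimpleGraph X} (hG : G.IsAcyclic)
    (x S : ℕ → X) (m : ℕ) (hm : 0 < m)
    (hxS : ∀ i, G.Adj (x i) (S i)) (hSx : ∀ i, G.Adj (S i) (x (i + 1)))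
    (hx : ∀ i, x i ≠ x (i + 1)) (hS : ∀ i, i + 1 < m → S i ≠ S (i + 1)) :
    x m ≠ x 0 := by
  have key : ∀ i, i < m → ∃ (p : G.Walk (x (i + 1)) (x 0)) (l : List (Sym2 X)),
      p.edges = s(x (i + 1), S i) :: l ∧ p.edges.IsChain (· ≠ ·) := by
    intro i
    induction i with
    | zero =>
      intro _
      refine ⟨.cons (hSx 0).symm (.cons (hxS 0).symm .nil), _, rfl, ?_⟩
      simp only [SimpleGraph.Walk.edges_cons, SimpleGraph.Walk.edges_nil,
        List.isChain_cons_cons, List.isChain_singleton, and_true]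
      intro h
      rw [Sym2.eq_swap, Sym2.congr_right] at h
      exact hx 0 h.symm
    | succ i ih =>
      intro hi
      obtain ⟨p, l, hp, hc⟩ := ih (by omega)
      refine ⟨.cons (hSx (i + 1)).symm (.cons (hxS (i + 1)).symm p), _, rfl, ?_⟩
      rw [hp] at hc
      simp only [SimpleGraph.Walk.edges_cons, hp, List.isChain_cons_cons]
      refine ⟨fun h => ?_, fun h => ?_, hc⟩
      · rw [Sym2.eq_swap, Sym2.congr_right] at h
        exact hx (i + 1) h.symm
      · rw [Sym2.eq_swap, Sym2.congr_right] at h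
        exact hS i hi h.symm
  obtain ⟨i, rfl⟩ : ∃ i, m = i + 1 := ⟨m - 1, by omega⟩
  obtain ⟨p, l, hp, hc⟩ := key i (by omega)
  have hpath := (hG.isPath_iff_isChain p).2 hc
  intro h
  have hnil : p.length = 0 := by
    revert p
    rw [h]
    intro p _ _ hpath
    exact SimpleGraph.Walk.length_eq_zero_iff.2 (SimpleGraph.Walk.isPath_iff_nil.1 hpath)
  rw [← SimpleGraph.Walk.length_edges, hp] at hnil
  simp at hnil

/-- In any quotient of `T`, the output of `t_i` is connected to every path vertex of `t_i` by edges
of color `ℓ_i`. -/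
lemma colorSetoid_outVtx_pathVtx {K : Type} {L : ℕ} (n : ℕ) (ℓv : Fin n → Fin L)
    (d : Fin n → ℕ) (g : Fin n → ℕ → GraphMonomial L K)
    (π : Setoid (Quotient (glueSetoid n d g))) (i : Fin n) (j : Fin (d i + 1)) :
    colorSetoid (fun e => Quotient.mk π (bigSrc n d g e))
      (fun e => Quotient.mk π (bigTgt n d g e)) (bigCol n ℓv d g) (ℓv i)
      (Quotient.mk π (Quotient.mk _ (outVtx n d g i)))
      (Quotient.mk π (Quotient.mk _ (pathVtx n d g i j))) := by
  induction j using Fin.induction with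
  | zero => exact Setoid.refl' _ _
  | succ j ih =>
    refine Setoid.trans' _ ih ?_
    exact Relation.ReflTransGen.single
      ⟨Sum.inr ⟨i, j⟩, fun h => h rfl, Or.inr ⟨rfl, rfl⟩⟩

/-- Lemma 4.6.
For the test graph `T` built from `t_1, …, t_n`, there is no partition `π` of
its vertex set separating `v_i` from `v_{i-1}` for every `i` and such that the
graph of colored components of `T^π` is a tree: equivalently, if
`GCC(T^π)` is a tree, then `v_i` and `v_{i-1}` lie in a common block of `π`
for some `i`. -/
theorem gcc_tree_forces_identification
    {K : Type} [Nonempty K] [Finite K] {L : ℕ} (hL : 1 ≤ L)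
    (n : ℕ) (hn : 2 ≤ n) (ℓv : Fin n → Fin L)
    (hadj : ∀ (i : ℕ) (h1 : i + 1 < n),
      ℓv ⟨i, Nat.lt_of_succ_lt h1⟩ ≠ ℓv ⟨i + 1, h1⟩)
    (d : Fin n → ℕ) (hd : ∀ i, 1 ≤ d i) (kv : Fin n → ℕ → K)
    (g : Fin n → ℕ → GraphMonomial L K)
    (hg : ∀ (i : Fin n) (j : ℕ), j ≤ d i → (g i j).IsCactusType)
    (π : Setoid (Quotient (glueSetoid n d g)))
    (htree : (gccGraph (fun e => Quotient.mk π (bigSrc n d g e))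
        (fun e => Quotient.mk π (bigTgt n d g e)) (bigCol n ℓv d g)).IsTree) :
    ∃ i : Fin n, π.r (vCls n d g (nxt i)) (vCls n d g i) := by
  by_contra! hsep
  have hpos : 0 < n := by omega
  let idx : ℕ → Fin n := fun j => ⟨j % n, Nat.mod_lt _ hpos⟩
  have hnxt : ∀ j, nxt (idx j) = idx (j + 1) := fun j => by
    simp [nxt, idx, Nat.mod_add_mod]
  have hglue : ∀ j, vCls n d g (idx j) = Quotient.mk _ (outVtx n d g (idx (j + 1))) := fun j =>
    Quotient.sound (Relation.EqvGen.rel _ _ ⟨idx j, rfl, by rw [hnxt]⟩)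
  let x : ℕ → Quotient π := fun j => Quotient.mk π (Quotient.mk _ (outVtx n d g (idx j)))
  have hxsucc : ∀ j, x (j + 1) = Quotient.mk π (vCls n d g (idx j)) := fun j =>
    congrArg (Quotient.mk π) (hglue j).symm
  let S : ℕ → ColoredComp (fun e => Quotient.mk π (bigSrc n d g e))
      (fun e => Quotient.mk π (bigTgt n d g e)) (bigCol n ℓv d g) := fun j =>
    ⟨⟨ℓv (idx j), Quotient.mk _ (x j)⟩, Sum.inr ⟨idx j, ⟨0, hd (idx j)⟩⟩, rfl,
      Quotient.sound (Setoid.symm' _ (colorSetoid_outVtx_pathVtx n ℓv d g π _ _))⟩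
  refine htree.isAcyclic.ne_of_alternating (fun j => Sum.inr (x j)) (fun j => Sum.inl (S j))
    n hpos (fun j => ?_) (fun j => ?_) (fun j h => ?_) (fun j hj h => ?_) ?_
  · exact Or.inr ⟨S j, x j, rfl, rfl, rfl⟩
  · refine Or.inl ⟨S j, x (j + 1), rfl, rfl, ?_⟩
    rw [hxsucc]
    exact Quotient.sound (Setoid.symm' _ (colorSetoid_outVtx_pathVtx n ℓv d g π _ _))
  · have hper : idx j = idx (j + n - 1 + 1) := by
      simp [idx, show j + n - 1 + 1 = j + n by omega]
    have hx : x j = Quotient.mk π (vCls n d g (idx (j + n - 1))) := by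
      rw [← hxsucc]
      simp only [x, hper]
    have h' : x (j + 1) = x j := (Sum.inr_injective h).symm
    rw [hx, hxsucc, hper, ← hnxt] at h'
    exact hsep _ (Quotient.exact h')
  · have hcol : ℓv (idx j) = ℓv (idx (j + 1)) :=
      congrArg (fun C => C.1.1) (Sum.inl_injective h)
    simp only [idx, Nat.mod_eq_of_lt hj, Nat.mod_eq_of_lt (Nat.lt_of_succ_lt hj)] at hcol
    exact hadj j hj hcol
  · simp [x, idx]
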